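/- arXiv:0710.1635 — 6 statements merged into one kernel-verified Lean document; each statement's English description precedes it below -/
import Mathlib

section
/- Let u : [0,1] → ℝ be a twice continuously differentiable function such that u(0) = 0, u(t) > 0 for all t ∈ (0,1], and u''(t) + (π²/4)·u(t) ≥ 0 for all t ∈ [0,1]. Then u(t) ≤ u(1)·sin(t·π/2) for all t ∈ [0,1]. -/
/-- **Sturm-type comparison lemma.** Let `u : [0,1] → ℝ` be twice continuously
differentiable with `u 0 = 0`, `u t > 0` for `t ∈ (0,1]`, and
`u'' t + (π²/4) · u t ≥ 0` on `[0,1]`. Then `u t ≤ u 1 · sin (t·π/2)` for all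
`t ∈ [0,1]`. -/
theorem sturm_comparison
    (u u' u'' : ℝ → ℝ)
    (hu' : ∀ t ∈ Set.Icc (0 : ℝ) 1, HasDerivWithinAt u (u' t) (Set.Icc (0 : ℝ) 1) t)
    (hu'' : ∀ t ∈ Set.Icc (0 : ℝ) 1, HasDerivWithinAt u' (u'' t) (Set.Icc (0 : ℝ) 1) t)
    (hcont : ContinuousOn u'' (Set.Icc (0 : ℝ) 1))
    (h0 : u 0 = 0)
    (hpos : ∀ t ∈ Set.Ioc (0 : ℝ) 1, 0 < u t)
    (hineq : ∀ t ∈ Set.Icc (0 : ℝ) 1, 0 ≤ u'' t + (Real.pi ^ 2 / 4) * u t) :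
    ∀ t ∈ Set.Icc (0 : ℝ) 1, u t ≤ u 1 * Real.sin (t * (Real.pi / 2)) := by
  have hv : ∀ t : ℝ, HasDerivAt (fun t : ℝ => Real.sin (t * (Real.pi / 2)))
      (Real.cos (t * (Real.pi / 2)) * (Real.pi / 2)) t := by
    intro t
    have h := ((hasDerivAt_id t).mul_const (Real.pi / 2)).sin
    simpa using h
  have hv' : ∀ t : ℝ, HasDerivAt (fun t : ℝ => Real.cos (t * (Real.pi / 2)) * (Real.pi / 2))
      (-Real.sin (t * (Real.pi / 2)) * (Real.pi / 2) * (Real.pi / 2)) t := by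
    intro t
    have h := (((hasDerivAt_id t).mul_const (Real.pi / 2)).cos).mul_const (Real.pi / 2)
    simpa using h
  have hpi := Real.pi_pos
  have hvpos : ∀ t ∈ Set.Ioc (0 : ℝ) 1, 0 < Real.sin (t * (Real.pi / 2)) := by
    intro t ht
    apply Real.sin_pos_of_pos_of_lt_pi
    · have := ht.1
      positivity
    · nlinarith [ht.2]
  have hWd : ∀ t ∈ Set.Icc (0 : ℝ) 1, HasDerivWithinAt
      (fun t => u' t * Real.sin (t * (Real.pi / 2))
        - u t * (Real.cos (t * (Real.pi / 2)) * (Real.pi / 2)))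
      ((u'' t + (Real.pi ^ 2 / 4) * u t) * Real.sin (t * (Real.pi / 2)))
      (Set.Icc (0 : ℝ) 1) t := by
    intro t ht
    have h := ((hu'' t ht).fun_mul (hv t).hasDerivWithinAt).fun_sub
      ((hu' t ht).fun_mul (hv' t).hasDerivWithinAt)
    refine h.congr_deriv ?_
    ring
  have hWm := monotoneOn_of_hasDerivWithinAt_nonneg (convex_Icc (0 : ℝ) 1)
    (fun t ht => (hWd t ht).continuousWithinAt)
    (fun t ht => (hWd t (interior_subset ht)).mono interior_subset)
    (fun t ht => by
      rw [interior_Icc] at ht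
      exact mul_nonneg (hineq t ⟨ht.1.le, ht.2.le⟩) (hvpos t ⟨ht.1, ht.2.le⟩).le)
  have hW : ∀ t ∈ Set.Icc (0 : ℝ) 1, 0 ≤ u' t * Real.sin (t * (Real.pi / 2))
        - u t * (Real.cos (t * (Real.pi / 2)) * (Real.pi / 2)) := by
    intro t ht
    have h := hWm (Set.left_mem_Icc.2 zero_le_one) ht ht.1
    simpa [h0] using h
  have hsub : Set.Ioc (0 : ℝ) 1 ⊆ Set.Icc 0 1 := Set.Ioc_subset_Icc_self
  have hqd : ∀ t ∈ Set.Ioc (0 : ℝ) 1, HasDerivWithinAt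
      (fun t => u t / Real.sin (t * (Real.pi / 2)))
      ((u' t * Real.sin (t * (Real.pi / 2))
        - u t * (Real.cos (t * (Real.pi / 2)) * (Real.pi / 2)))
        / Real.sin (t * (Real.pi / 2)) ^ 2)
      (Set.Ioc (0 : ℝ) 1) t := by
    intro t ht
    exact ((hu' t (hsub ht)).mono hsub).fun_div (hv t).hasDerivWithinAt (hvpos t ht).ne'
  have hqm := monotoneOn_of_hasDerivWithinAt_nonneg (convex_Ioc (0 : ℝ) 1)
    (fun t ht => (hqd t ht).continuousWithinAt)
    (fun t ht => (hqd t (interior_subset ht)).mono interior_subset)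
    (fun t ht => div_nonneg (hW t (hsub (interior_subset ht))) (sq_nonneg _))
  intro t ht
  rcases ht.1.eq_or_lt with h | h
  · subst h
    simp [h0]
  · have hq := hqm ⟨h, ht.2⟩ (Set.right_mem_Ioc.2 zero_lt_one) ht.2
    simp only [one_mul, Real.sin_pi_div_two, div_one] at hq
    exact (div_le_iff₀ (hvpos t ⟨h, ht.2⟩)).1 hq
end

section
/- For every m ∈ ℕ there exist families R₀, …, R_{m−1}, where each R_j is a set of bounded open intervals of ℝ, such that: (i) each R_j covers ℝ, i.e. ⋃ R_j = ℝ; (ii) each R_j has multiplicity at most 2, i.e. every real number belongs to at most 2 members of R_j; and (iii) for all i ≠ j the disjoint union R_i ⊔ R_j has multiplicity at most 3, i.e. for every r ∈ ℝ the number of members of R_i containing r plus the number of members of R_j containing r is at most 3. -/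
/-- The `k`-th interval of the `j`-th family. -/
def coverIoo (m j : ℕ) (k : ℤ) : Set ℝ :=
  Set.Ioo (2 * m * k + 2 * j : ℝ) (2 * m * k + 2 * m + 2 * j + 1)

theorem coverIoo_key (m j : ℕ) (hm : 0 < m) (r : ℝ) :
    ∃ q : ℤ, (2 * m * q + 2 * j : ℝ) ≤ r ∧ r < 2 * m * q + 2 * m + 2 * j ∧
      {I ∈ Set.range (coverIoo m j) | r ∈ I} ⊆ {coverIoo m j q, coverIoo m j (q - 1)} ∧
      ((2 * m * q + 2 * j + 1 : ℝ) ≤ r →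
        {I ∈ Set.range (coverIoo m j) | r ∈ I} ⊆ {coverIoo m j q}) := by
  have hm1 : (1 : ℝ) ≤ m := by exact_mod_cast hm
  have hpos : (0 : ℝ) < 2 * m := by linarith
  obtain ⟨q, hq⟩ : ∃ q : ℤ, q = ⌊(r - 2 * j) / (2 * m)⌋ := ⟨_, rfl⟩
  have h1 : (q : ℝ) ≤ (r - 2 * j) / (2 * m) := by rw [hq]; exact Int.floor_le _
  have h2 : (r - 2 * j) / (2 * m) < q + 1 := by rw [hq]; exact Int.lt_floor_add_one _
  rw [le_div_iff₀ hpos] at h1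
  rw [div_lt_iff₀ hpos] at h2
  have up : ∀ k : ℤ, r ∈ coverIoo m j k → k ≤ q := by
    rintro k ⟨ha, hb⟩
    by_contra! h
    have : (q : ℝ) + 1 ≤ k := by exact_mod_cast h
    nlinarith
  refine ⟨q, by linarith, by linarith, ?_, ?_⟩
  · rintro _ ⟨⟨k, rfl⟩, hk⟩
    have hle := up k hk
    obtain ⟨ha, hb⟩ := hk
    have : q - 1 ≤ k := by
      by_contra! h
      have : (k : ℝ) + 2 ≤ q := by exact_mod_cast (by omega : k + 2 ≤ q)
      nlinarith
    rcases (by omega : k = q ∨ k = q - 1) with rfl | rfl <;> simp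
  · rintro hr _ ⟨⟨k, rfl⟩, hk⟩
    have hle := up k hk
    obtain ⟨ha, hb⟩ := hk
    have : q ≤ k := by
      by_contra! h
      have : (k : ℝ) + 1 ≤ q := by exact_mod_cast h
      nlinarith
    rw [le_antisymm hle this]; rfl

/-- **Interval covers with small combined multiplicity.**
For every `m` there are families `R 0, …, R (m-1)` of bounded open intervals
of `ℝ` such that each family covers `ℝ`, each family has multiplicity at
most `2`, and for `i ≠ j` the disjoint union of the families `R i` and `R j`
has multiplicity at most `3`. -/
theorem interval_covers_small_multiplicity (m : ℕ) :
    ∃ R : Fin m → Set (Set ℝ),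
      (∀ j, ∀ I ∈ R j, ∃ a b : ℝ, a < b ∧ I = Set.Ioo a b) ∧
      (∀ j, ⋃₀ R j = Set.univ) ∧
      (∀ j, ∀ r : ℝ, ({I ∈ R j | r ∈ I}).encard ≤ 2) ∧
      (∀ i j, i ≠ j → ∀ r : ℝ,
        ({I ∈ R i | r ∈ I}).encard + ({I ∈ R j | r ∈ I}).encard ≤ 3) := by
  have two : ∀ j : Fin m, ∀ r : ℝ,
      ({I ∈ Set.range (coverIoo m j) | r ∈ I}).encard ≤ 2 := by
    intro j r
    obtain ⟨q, -, -, h, -⟩ := coverIoo_key m j j.pos r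
    refine (Set.encard_le_encard h).trans ((Set.encard_insert_le _ _).trans ?_)
    rw [Set.encard_singleton]; norm_num
  refine ⟨fun j => Set.range (coverIoo m j), ?_, ?_, two, ?_⟩
  · rintro j _ ⟨k, rfl⟩
    exact ⟨_, _, by have : (0 : ℝ) ≤ m := Nat.cast_nonneg m
                    linarith, rfl⟩
  · intro j
    rw [Set.eq_univ_iff_forall]
    intro r
    obtain ⟨q, h1, h2, -, -⟩ := coverIoo_key m j j.pos r
    have hm1 : (1 : ℝ) ≤ m := by exact_mod_cast j.pos
    rcases h1.eq_or_lt with h | h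
    · refine ⟨_, ⟨q - 1, rfl⟩, ?_, ?_⟩ <;> push_cast <;> linarith
    · exact ⟨_, ⟨q, rfl⟩, h, by linarith⟩
  · intro i j hij r
    obtain ⟨p, hp1, hp2, -, hp⟩ := coverIoo_key m i i.pos r
    obtain ⟨q, hq1, hq2, -, hq⟩ := coverIoo_key m j j.pos r
    by_cases hi : (2 * m * p + 2 * (i : ℕ) + 1 : ℝ) ≤ r
    · have := (Set.encard_le_encard (hp hi)).trans (Set.encard_singleton _).le
      exact (add_le_add this (two j r)).trans (by norm_num)
    by_cases hj : (2 * m * q + 2 * (j : ℕ) + 1 : ℝ) ≤ r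
    · have := (Set.encard_le_encard (hq hj)).trans (Set.encard_singleton _).le
      exact (add_le_add (two i r) this).trans (by norm_num)
    exfalso
    push Not at hi hj
    have e1 : (2 * m * p + 2 * (i : ℕ) : ℤ) < 2 * m * q + 2 * (j : ℕ) + 1 := by
      exact_mod_cast hp1.trans_lt hj
    have e2 : (2 * m * q + 2 * (j : ℕ) : ℤ) < 2 * m * p + 2 * (i : ℕ) + 1 := by
      exact_mod_cast hq1.trans_lt hi
    have e : ((i : ℕ) : ℤ) - (j : ℕ) = m * (q - p) := by linarith
    have : ((i : ℕ) : ℤ) - (j : ℕ) = 0 := by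
      apply Int.eq_zero_of_abs_lt_dvd (Dvd.intro _ e.symm)
      have := i.isLt
      have := j.isLt
      rw [abs_lt]; constructor <;> omega
    exact hij (Fin.ext (by omega))
end

section
/- Let X be a set, J a finite index set, k ∈ ℕ, and f : X → ℝ a map. Let (U_j)_{j∈J} be a family of subsets of X such that every x ∈ X lies in U_j for at most k+1 indices j ∈ J. For each j ∈ J let R_j be a family of subsets of ℝ such that every real number belongs to at most 2 members of R_j, and such that for all i ≠ j in J and every r ∈ ℝ the number of members of R_i containing r plus the number of members of R_j containing r is at most 3. Then for every x ∈ X the number of pairs (j, W) with j ∈ J, W ∈ R_j, x ∈ U_j and f(x) ∈ W is at most k+2; that is, the combined family (U_j ∩ f⁻¹(W))_{j∈J, W∈R_j} has multiplicity at most k+2. -/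
/-- **Multiplicity count for the combined covering.**
If `(U j)_{j ∈ J}` (with `J` finite) has multiplicity at most `k+1` on `X`, and
the interval families `R j` each have multiplicity at most `2` with pairwise
combined multiplicity at most `3`, then the combined family
`(U j ∩ f⁻¹ W)_{j ∈ J, W ∈ R j}` has multiplicity at most `k+2`. -/
theorem combined_cover_multiplicity
    {X J : Type*} [Finite J] (k : ℕ) (f : X → ℝ) (U : J → Set X)
    (hU : ∀ x : X, ({j : J | x ∈ U j}).encard ≤ (k : ℕ∞) + 1)
    (R : J → Set (Set ℝ))
    (hR2 : ∀ j : J, ∀ r : ℝ, ({W ∈ R j | r ∈ W}).encard ≤ 2)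
    (hR3 : ∀ i j : J, i ≠ j → ∀ r : ℝ,
      ({W ∈ R i | r ∈ W}).encard + ({W ∈ R j | r ∈ W}).encard ≤ 3) :
    ∀ x : X,
      ({p : J × Set ℝ | p.2 ∈ R p.1 ∧ x ∈ U p.1 ∧ f x ∈ p.2}).encard
        ≤ (k : ℕ∞) + 2 := by
  intro x
  set S := {p : J × Set ℝ | p.2 ∈ R p.1 ∧ x ∈ U p.1 ∧ f x ∈ p.2} with hS
  have key : ∀ T : Set (J × Set ℝ), T ⊆ S → Set.InjOn Prod.fst T →
      T.encard ≤ (k : ℕ∞) + 1 := by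
    intro T hT hinj
    rw [← hinj.encard_image]
    refine (Set.encard_le_encard ?_).trans (hU x)
    rintro _ ⟨p, hp, rfl⟩
    exact (hT hp).2.1
  have two : ∀ (j : J) (V W : Set ℝ), (j, V) ∈ S → (j, W) ∈ S → V ≠ W →
      2 ≤ ({W ∈ R j | f x ∈ W}).encard := by
    intro j V W hV hW hne
    rw [← Set.encard_pair hne]
    apply Set.encard_le_encard
    rintro Z (rfl | rfl)
    · exact ⟨hV.1, hV.2.2⟩
    · exact ⟨hW.1, hW.2.2⟩
  by_cases hinj : Set.InjOn Prod.fst S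
  · refine (key S subset_rfl hinj).trans ?_
    gcongr
    norm_num
  · simp only [Set.InjOn, not_forall] at hinj
    obtain ⟨⟨j, V⟩, hV, ⟨j', W⟩, hW, hjj, hne⟩ := hinj
    obtain rfl : j = j' := hjj
    have hVW : V ≠ W := fun h => hne (by rw [h])
    have hinj' : Set.InjOn Prod.fst (S \ {(j, V)}) := by
      rintro ⟨i, A⟩ ⟨hA, hA'⟩ ⟨i', B⟩ ⟨hB, hB'⟩ hii
      obtain rfl : i = i' := hii
      by_contra hAB
      have hAB' : A ≠ B := fun h => hAB (by rw [h])
      by_cases hij : i = j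
      · subst hij
        have hAV : V ≠ A := fun h => hA' (by rw [h]; rfl)
        have hBV : V ≠ B := fun h => hB' (by rw [h]; rfl)
        have h3 : ({V, A, B} : Set (Set ℝ)).encard = 3 :=
          Set.encard_eq_three.2 ⟨V, A, B, hAV, hBV, hAB', rfl⟩
        have hle : ({V, A, B} : Set (Set ℝ)).encard ≤ ({W ∈ R i | f x ∈ W}).encard := by
          apply Set.encard_le_encard
          rintro Z (rfl | rfl | rfl)
          · exact ⟨hV.1, hV.2.2⟩
          · exact ⟨hA.1, hA.2.2⟩
          · exact ⟨hB.1, hB.2.2⟩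
        rw [h3] at hle
        exact absurd (hle.trans (hR2 i (f x))) (by decide)
      · have h := (add_le_add (two i A B hA hB hAB') (two j V W hV hW hVW)).trans
          (hR3 i j hij (f x))
        exact absurd h (by decide)
    rw [← Set.encard_diff_singleton_add_one hV]
    calc _ ≤ (k : ℕ∞) + 1 + 1 := by
          gcongr
          exact key _ Set.diff_subset hinj'
      _ = (k : ℕ∞) + 2 := by rw [add_assoc, one_add_one_eq_two]
end

section
/- Let M and N be metric spaces, K_M ⊆ M and K_N ⊆ N subsets, let A be a bounded metric space, let L ≥ 0, and let σ : A → M × N be an L-Lipschitz map, where M × N carries the sup product metric. Set D = L · diam(A). If the image of σ is disjoint from the product cthickening_D(K_M) × cthickening_D(K_N) of the closed D-thickenings, then either the image of π_M ∘ σ is contained in M ∖ K_M or the image of π_N ∘ σ is contained in N ∖ K_N, where π_M and π_N denote the projections of M × N onto its two factors. -/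
open scoped NNReal

/-- **Projection alternative for Lipschitz maps into a product.**
Let `σ : A → M × N` be `L`-Lipschitz on a bounded metric space `A` (the product
carrying the sup metric), and set `D = L · diam A`. If the image of `σ` avoids
`cthickening D K_M ×ˢ cthickening D K_N`, then the image of `π_M ∘ σ` lies in
`M ∖ K_M` or the image of `π_N ∘ σ` lies in `N ∖ K_N`. -/
theorem lipschitz_product_projection_alternative
    {M N A : Type*} [MetricSpace M] [MetricSpace N] [MetricSpace A]
    [BoundedSpace A]
    (K_M : Set M) (K_N : Set N) (L : ℝ≥0) (σ : A → M × N)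
    (hσ : LipschitzWith L σ)
    (hdisj : Disjoint (Set.range σ)
      ((Metric.cthickening ((L : ℝ) * Metric.diam (Set.univ : Set A)) K_M) ×ˢ
       (Metric.cthickening ((L : ℝ) * Metric.diam (Set.univ : Set A)) K_N))) :
    Set.range (Prod.fst ∘ σ) ⊆ K_Mᶜ ∨ Set.range (Prod.snd ∘ σ) ⊆ K_Nᶜ := by
  by_contra h
  rw [not_or, Set.not_subset, Set.not_subset] at h
  obtain ⟨⟨_, ⟨a, rfl⟩, ha⟩, ⟨_, ⟨b, rfl⟩, hb⟩⟩ := h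
  have ha' : (σ a).1 ∈ K_M := Set.notMem_compl_iff.mp ha
  have hb' : (σ b).2 ∈ K_N := Set.notMem_compl_iff.mp hb
  refine Set.disjoint_left.mp hdisj ⟨a, rfl⟩ ⟨Metric.self_subset_cthickening _ ha', ?_⟩
  refine Metric.mem_cthickening_of_dist_le _ _ _ _ hb' ?_
  calc dist (σ a).2 (σ b).2 ≤ dist (σ a) (σ b) := le_max_right _ _
    _ ≤ L * dist a b := hσ.dist_le_mul a b
    _ ≤ L * Metric.diam (Set.univ : Set A) := by
      gcongr
      exact Metric.dist_le_diam_of_mem (Bornology.IsBounded.all _) trivial trivial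
end

section
/- Let n ∈ ℕ, L ≥ 0, let f : ℝⁿ → ℝⁿ be an L-Lipschitz map, and let s ⊆ ℝⁿ be a measurable set of finite Lebesgue measure. Then |∫_s det(Df(x)) dx| ≤ Lⁿ · vol(s), where Df(x) denotes the Fréchet derivative of f at x, which exists for almost every x by Rademacher's theorem (on the null set of non-differentiability points the integrand may be taken to be 0). -/
open scoped NNReal

lemma abs_det_le_pow (n : ℕ) (L : ℝ≥0)
    (A : EuclideanSpace ℝ (Fin n) →L[ℝ] EuclideanSpace ℝ (Fin n)) (hA : ‖A‖ ≤ L) :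
    |A.det| ≤ (L : ℝ) ^ n := by
  have hsub : A '' Metric.closedBall 0 1 ⊆ Metric.closedBall 0 (L : ℝ) := by
    rintro _ ⟨x, hx, rfl⟩
    rw [mem_closedBall_zero_iff] at hx ⊢
    calc ‖A x‖ ≤ ‖A‖ * ‖x‖ := A.le_opNorm x
      _ ≤ L * 1 := by gcongr
      _ = L := mul_one _
  have h := MeasureTheory.measure_mono (μ := MeasureTheory.volume) hsub
  rw [MeasureTheory.Measure.addHaar_image_continuousLinearMap,
    MeasureTheory.Measure.addHaar_closedBall' _ _ L.coe_nonneg,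
    finrank_euclideanSpace_fin] at h
  have h2 := (ENNReal.mul_le_mul_iff_left
    (Metric.measure_closedBall_pos MeasureTheory.volume _ zero_lt_one).ne'
    MeasureTheory.measure_closedBall_lt_top.ne).1 h
  exact (ENNReal.ofReal_le_ofReal_iff (by positivity)).1 h2

/-- **Jacobian integral estimate for Lipschitz maps.**
If `f : ℝⁿ → ℝⁿ` is `L`-Lipschitz and `s` is a measurable set of finite
Lebesgue measure, then `|∫_s det (Df x) dx| ≤ Lⁿ · vol s`. (At points where
`f` is not differentiable -- a null set by Rademacher's theorem -- `fderiv`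
is `0` by convention, so the integrand vanishes there.) -/
theorem abs_integral_det_fderiv_le
    (n : ℕ) (L : ℝ≥0)
    (f : EuclideanSpace ℝ (Fin n) → EuclideanSpace ℝ (Fin n))
    (hf : LipschitzWith L f)
    (s : Set (EuclideanSpace ℝ (Fin n)))
    (hs : MeasurableSet s) (hvol : MeasureTheory.volume s < ⊤) :
    |∫ x in s, (fderiv ℝ f x).det| ≤ (L : ℝ) ^ n * (MeasureTheory.volume s).toReal := by
  have h := MeasureTheory.norm_setIntegral_le_of_norm_le_const (μ := MeasureTheory.volume)
    (f := fun x => (fderiv ℝ f x).det) (C := (L : ℝ) ^ n) hvol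
    (fun x _ => abs_det_le_pow n L _ (norm_fderiv_le_of_lipschitz ℝ hf))
  exact h
end

section
/- Let X be a Hausdorff topological space, k ∈ ℕ, and suppose there exists a continuous proper map f : X → ℝ (preimages of compact sets are compact). Let (U_j)_{j∈J} be a finite open cover of X such that every point of X lies in at most k+1 of the sets U_j. Then X admits an open cover 𝒱 with the following properties: every member of 𝒱 has the form U_j ∩ f⁻¹(W) for some j ∈ J and some bounded open interval W ⊆ ℝ (in particular each member is contained in some U_j and is relatively compact), the family 𝒱 is locally finite, and every point of X lies in at most k+2 members of 𝒱 (counted over the indexing pairs (j, W)). -/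
/-- **Construction of locally finite relatively compact refinements of small
multiplicity.** Let `X` be Hausdorff with a continuous proper map `f : X → ℝ`,
and let `(U j)_{j ∈ J}` be a finite open cover of multiplicity at most `k+1`.
Then there are families `R j` of bounded open intervals such that the sets
`U j ∩ f⁻¹ W` (for `j ∈ J`, `W ∈ R j`) form an open cover of `X` by relatively
compact sets, the family is locally finite, and every point lies in at most
`k+2` members (counted over the indexing pairs `(j, W)`). -/
theorem exists_locally_finite_relatively_compact_refinement
    {X J : Type*} [TopologicalSpace X] [T2Space X] [Finite J] (k : ℕ)
    (f : X → ℝ) (hf : Continuous f)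
    (hproper : ∀ K : Set ℝ, IsCompact K → IsCompact (f ⁻¹' K))
    (U : J → Set X) (hUopen : ∀ j, IsOpen (U j))
    (hUcover : ⋃ j, U j = Set.univ)
    (hUmult : ∀ x : X, ({j : J | x ∈ U j}).encard ≤ (k : ℕ∞) + 1) :
    ∃ R : J → Set (Set ℝ),
      (∀ j, ∀ W ∈ R j, ∃ a b : ℝ, a < b ∧ W = Set.Ioo a b) ∧
      (∀ x : X, ∃ j, ∃ W ∈ R j, x ∈ U j ∩ f ⁻¹' W) ∧
      (∀ j, ∀ W ∈ R j, IsOpen (U j ∩ f ⁻¹' W)) ∧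
      (∀ j, ∀ W ∈ R j, IsCompact (closure (U j ∩ f ⁻¹' W))) ∧
      (LocallyFinite (fun p : (j : J) × {W : Set ℝ // W ∈ R j} =>
        U p.1 ∩ f ⁻¹' (p.2 : Set ℝ))) ∧
      (∀ x : X,
        ({p : J × Set ℝ | p.2 ∈ R p.1 ∧ x ∈ U p.1 ∩ f ⁻¹' p.2}).encard
          ≤ (k : ℕ∞) + 2) := by
  classical
  obtain ⟨n, ⟨e0⟩⟩ := Finite.exists_equiv_fin J
  obtain ⟨N, hN⟩ : ∃ N : ℤ, N = (n : ℤ) + 1 := ⟨_, rfl⟩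
  obtain ⟨e, he⟩ : ∃ e : J → ℤ, ∀ j, e j = ((e0 j : ℕ) : ℤ) := ⟨_, fun _ => rfl⟩
  have he0 : ∀ j, 0 ≤ e j := fun j => by rw [he]; positivity
  have heN : ∀ j, e j < N := fun j => by
    have := (e0 j).isLt
    rw [he]; omega
  have hinj : ∀ i j, e i = e j → i = j := fun i j h => by
    rw [he, he] at h
    exact e0.injective (Fin.ext (by exact_mod_cast h))
  have hN1 : 1 ≤ N := by omega
  clear he hN
  have hNR : (1 : ℝ) ≤ N := by exact_mod_cast hN1
  let W : J → ℤ → Set ℝ := fun j m =>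
    Set.Ioo ((N * m + e j : ℤ) : ℝ) ((N * m + e j + N + 1 : ℤ) : ℝ)
  have hWopen : ∀ j m, IsOpen (W j m) := fun j m => isOpen_Ioo
  refine ⟨fun j => Set.range (W j), ?_, ?_, ?_, ?_, ?_, ?_⟩
  · rintro j _ ⟨m, rfl⟩
    exact ⟨_, _, by exact_mod_cast (by omega : N * m + e j < N * m + e j + N + 1), rfl⟩
  · intro x
    have hx : x ∈ ⋃ j, U j := by rw [hUcover]; trivial
    obtain ⟨j, hj⟩ := Set.mem_iUnion.1 hx
    refine ⟨j, W j ((⌈f x⌉ - 1 - e j) / N), ⟨_, rfl⟩, hj, ?_⟩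
    have h1 := Int.emod_add_mul_ediv (⌈f x⌉ - 1 - e j) N
    have h2 := Int.emod_nonneg (⌈f x⌉ - 1 - e j) (by omega : N ≠ 0)
    have h3 := Int.emod_lt_of_pos (⌈f x⌉ - 1 - e j) (by omega : 0 < N)
    set q := (⌈f x⌉ - 1 - e j) / N
    constructor
    · exact Int.lt_ceil.1 (by omega)
    · refine lt_of_le_of_lt (Int.le_ceil (f x)) ?_
      exact_mod_cast (by omega : ⌈f x⌉ < N * q + e j + N + 1)
  · rintro j _ ⟨m, rfl⟩
    exact (hUopen j).inter ((hWopen j m).preimage hf)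
  · rintro j _ ⟨m, rfl⟩
    refine (hproper _ (isCompact_Icc (a := ((N * m + e j : ℤ) : ℝ))
      (b := ((N * m + e j + N + 1 : ℤ) : ℝ)))).closure_of_subset ?_
    rintro x ⟨-, hx⟩
    exact Set.Ioo_subset_Icc_self hx
  · intro x
    refine ⟨f ⁻¹' Set.Ioo (f x - 1) (f x + 1), (isOpen_Ioo.preimage hf).mem_nhds
      (by simp), ?_⟩
    obtain ⟨B, hB⟩ : ∃ B : ℤ, |f x| ≤ B := ⟨_, Int.le_ceil _⟩
    have hB' := abs_le.1 hB
    have hB0 : 0 ≤ B := by exact_mod_cast (abs_nonneg (f x)).trans hB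
    let h : J × ℤ → (j : J) × {V : Set ℝ // V ∈ Set.range (W j)} :=
      fun p => ⟨p.1, W p.1 p.2, p.2, rfl⟩
    refine ((Set.finite_univ.prod (Set.finite_Icc (-(B + 2 * N + 2)) (B + 1))).image h).subset ?_
    rintro ⟨j, _, m, rfl⟩ ⟨y, ⟨-, hy⟩, hy'⟩
    refine ⟨(j, m), ⟨trivial, ?_⟩, rfl⟩
    have a1 : ((N * m + e j : ℤ) : ℝ) < f y := hy.1
    have a2 : f y < ((N * m + e j + N + 1 : ℤ) : ℝ) := hy.2
    have a3 : f x - 1 < f y := hy'.1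
    have a4 : f y < f x + 1 := hy'.2
    have b1 : N * m + e j < B + 1 := by
      have : ((N * m + e j : ℤ) : ℝ) < ((B + 1 : ℤ) : ℝ) := by
        push_cast at a1 ⊢; linarith
      exact_mod_cast this
    have b2 : -B - 1 < N * m + e j + N + 1 := by
      have : ((-B - 1 : ℤ) : ℝ) < ((N * m + e j + N + 1 : ℤ) : ℝ) := by
        push_cast at a2 ⊢; linarith
      exact_mod_cast this
    have c1 := he0 j
    have c2 := heN j
    constructor
    · change -(B + 2 * N + 2) ≤ m
      nlinarith
    · change m ≤ B + 1
      nlinarith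
  · intro x
    obtain ⟨c, hc⟩ : ∃ c : ℤ, c = ⌈f x⌉ - 1 := ⟨_, rfl⟩
    let T : Set (J × Set ℝ) :=
      {p | ∃ j, N ∣ c - e j ∧ p = (j, W j ((c - e j) / N - 1))}
    have hT : T.encard ≤ 1 := by
      rw [Set.encard_le_one_iff]
      rintro _ _ ⟨i, hi, rfl⟩ ⟨j, hj, rfl⟩
      have hd : N ∣ e i - e j := by
        have := dvd_sub hj hi
        rwa [show c - e j - (c - e i) = e i - e j by ring] at this
      have := he0 i
      have := he0 j
      have := heN i
      have := heN j
      have h0 : e i - e j = 0 := Int.eq_zero_of_abs_lt_dvd hd (by rw [abs_lt]; omega)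
      obtain rfl := hinj i j (by omega)
      rfl
    have hsub : {p : J × Set ℝ | p.2 ∈ Set.range (W p.1) ∧ x ∈ U p.1 ∩ f ⁻¹' p.2} ⊆
        (fun j => (j, W j ((c - e j) / N))) '' {j : J | x ∈ U j} ∪ T := by
      rintro ⟨j, V⟩ ⟨⟨m, hV⟩, hx, hm⟩
      change W j m = V at hV
      subst hV
      have a1 : N * m + e j < ⌈f x⌉ := Int.lt_ceil.2 hm.1
      have a2 : ⌈f x⌉ ≤ N * m + e j + N + 1 := Int.ceil_le.2 hm.2.le
      by_cases hlt : c - e j - N * m < N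
      · left
        refine ⟨j, hx, ?_⟩
        have : (c - e j) / N = m := by
          rw [Int.ediv_eq_iff_of_pos (by omega)]
          constructor <;> nlinarith
        simp only [this]
      · right
        have h1 : c - e j = N * (m + 1) := by
          rw [mul_add]; omega
        refine ⟨j, ⟨_, h1⟩, ?_⟩
        rw [h1, Int.mul_ediv_cancel_left _ (by omega)]
        simp
    calc _ ≤ _ := Set.encard_le_encard hsub
      _ ≤ _ := Set.encard_union_le _ _
      _ ≤ ((k : ℕ∞) + 1) + 1 := add_le_add ((Set.encard_image_le _ _).trans (hUmult x)) hT
      _ = (k : ℕ∞) + 2 := by rw [add_assoc]; rfl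
end
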